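/- Let N be an even positive integer and p an integer with 2 ≤ p ≤ N/2; assume u^p[2n]² + v^p[2n]² > 0 for every n. With φ_{[1],λ}^p = C(ψ_{[1],λ}^p), every x ∈ Π[N] admits the tight-frame expansion x[k] = (1/2)·Σ_{λ=0}^{1} Σ_{l=0}^{N/2−1} ( ⟨x, ψ_{[1],λ}^p[·−2l]⟩·ψ_{[1],λ}^p[k−2l] + ⟨x, φ_{[1],λ}^p[·−2l]⟩·φ_{[1],λ}^p[k−2l] ) for every k; i.e., the union of the shifted wavelet packets and the shifted complementary wavelet packets forms a tight frame of Π[N] with frame bound 2. -/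

import Mathlib

/-!
The shifts by multiples of `d` of signals with given spectra of length `dM` form a tight frame as
soon as, on every fibre of `n ↦ n mod M`, the vectors of spectral values are pairwise orthogonal of
constant norm: summing over the shifts kills all products of frequencies from different fibres, so
the frame kernel collapses to a Dirac comb. Here `d = 2` and the fibres are `{n, n + N/2}`.

Splitting the spectrum of the span-two spline into even and odd samples gives
`2 b̂[n] = u[2n] + v[2n]` and `2 b̂[n + N/2] = u[2n] - v[2n]`, whence `β[n]² + β[n + N/2]² = 2`.
Since the spline is symmetric, `β` is real, and the factor `ω^n` of `α` changes sign under
`n ↦ n + N/2`, so the products over distinct frequencies of a fibre cancel. The operator `C`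
multiplies spectra by unimodular numbers, which preserves the orthogonality, so `ψ` and `φ` each
contribute one copy of `x`.
-/

open MeasureTheory

namespace WP

/-- The root of unity ω = e^{2πi/N}. -/
noncomputable def ww (N : ℕ) : ℂ := Complex.exp (2 * Real.pi * Complex.I / N)

/-- DFT of a signal `x ∈ Π[N]`: x̂[n] = Σ_{k=0}^{N−1} ω^{−kn} x[k]. -/
noncomputable def dft (N : ℕ) (x : ℤ → ℂ) (n : ℤ) : ℂ :=
  ∑ k ∈ Finset.range N, ww N ^ (-((k : ℤ) * n)) * x k

/-- Inner product on `Π[N]`. -/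
noncomputable def inner1 (N : ℕ) (x y : ℤ → ℂ) : ℂ :=
  ∑ k ∈ Finset.range N, x k * (starRingEnd ℂ) (y k)

/-- The discrete periodic Hilbert transform, defined via the DFT:
    Ĥ(x)[n] = −i·x̂[n] for 0<n<N/2, i·x̂[n] for N/2<n<N, 0 at n=0 and n=N/2. -/
noncomputable def hilbertT (N : ℕ) (x : ℤ → ℂ) (k : ℤ) : ℂ :=
  (N : ℂ)⁻¹ * ∑ n ∈ Finset.range N,
    (if 0 < n ∧ n < N / 2 then -Complex.I else if N / 2 < n ∧ n < N then Complex.I else 0) *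
      dft N x n * ww N ^ ((k * (n : ℤ)))

/-- The complementary-WP operator `C`, defined via the DFT:
    Ĉ(x)[n] = −i·x̂[n] for 0<n<N/2, i·x̂[n] for N/2<n<N, x̂[0] at 0, x̂[N/2] at N/2. -/
noncomputable def cwpT (N : ℕ) (x : ℤ → ℂ) (k : ℤ) : ℂ :=
  (N : ℂ)⁻¹ * ∑ n ∈ Finset.range N,
    (if n = 0 ∨ n = N / 2 then 1 else if n < N / 2 then -Complex.I else Complex.I) *
      dft N x n * ww N ^ ((k * (n : ℤ)))

/-- The order-p B-spline b^p(t). -/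
noncomputable def bspline (p : ℕ) (t : ℝ) : ℝ :=
  (1 / (Nat.factorial (p - 1) : ℝ)) *
    ∑ k ∈ Finset.range (p + 1),
      (-1 : ℝ) ^ k * (p.choose k : ℝ) * max (t + (p : ℝ) / 2 - (k : ℝ)) 0 ^ (p - 1)

/-- u^p[n] = Σ_{k=−N/2}^{N/2−1} ω^{−kn} b^p(k). -/
noncomputable def uSeq (N p : ℕ) (n : ℤ) : ℂ :=
  ∑ k ∈ Finset.range N,
    ww N ^ (-(((k : ℤ) - (N : ℤ) / 2) * n)) * (bspline p ((k : ℝ) - (N : ℝ) / 2) : ℂ)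

/-- v^p[n] = e^{−πin/N} Σ_{k=−N/2}^{N/2−1} ω^{−kn} b^p(k+1/2). -/
noncomputable def vSeq (N p : ℕ) (n : ℤ) : ℂ :=
  Complex.exp (-Real.pi * Complex.I * n / N) *
    ∑ k ∈ Finset.range N,
      ww N ^ (-(((k : ℤ) - (N : ℤ) / 2) * n)) *
        (bspline p ((k : ℝ) - (N : ℝ) / 2 + 1 / 2) : ℂ)

/-- The span-two discrete-time B-spline b_{[1]}^p ∈ Π[N]:
    the N-periodic signal with b_{[1]}^p[k] = b^p(k/2)/2 for −N/2 ≤ k ≤ N/2−1. -/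
noncomputable def bs1 (N p : ℕ) (k : ℤ) : ℂ :=
  ((bspline p ((((k + (N : ℤ) / 2) % (N : ℤ) - (N : ℤ) / 2 : ℤ) : ℝ) / 2) : ℝ) : ℂ) / 2

/-- Its DFT b̂_{[1]}^p[n] = Σ_{k=−N/2}^{N/2−1} ω^{−kn} b_{[1]}^p[k]. -/
noncomputable def bhat1 (N p : ℕ) (n : ℤ) : ℂ :=
  ∑ k ∈ Finset.range N,
    ww N ^ (-(((k : ℤ) - (N : ℤ) / 2) * n)) * bs1 N p ((k : ℤ) - (N : ℤ) / 2)

/-- Υ^p[n] = (u^p[2n]² + v^p[2n]²)/4. -/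
noncomputable def upsilon (N p : ℕ) (n : ℤ) : ℂ :=
  (uSeq N p (2 * n) ^ 2 + vSeq N p (2 * n) ^ 2) / 4

/-- β[n] = b̂_{[1]}^p[n] / √(Υ^p[n]). -/
noncomputable def betaS (N p : ℕ) (n : ℤ) : ℂ := bhat1 N p n / upsilon N p n ^ ((1 : ℂ) / 2)

/-- α[n] = ω^n · β[n+N/2]. -/
noncomputable def alphaS (N p : ℕ) (n : ℤ) : ℂ := ww N ^ n * betaS N p (n + (N : ℤ) / 2)

/-- The first-level wavelet packets ψ_{[1],λ}^p, λ = 0,1, defined via their DFTs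
    ψ̂_{[1],0}^p[n] = β[n] and ψ̂_{[1],1}^p[n] = α[n]. -/
noncomputable def psi1 (N p lam : ℕ) (k : ℤ) : ℂ :=
  (N : ℂ)⁻¹ * ∑ n ∈ Finset.range N,
    (if lam = 0 then betaS N p n else alphaS N p n) * ww N ^ ((k * (n : ℤ)))


open scoped ComplexOrder

open Finset
open scoped ComplexConjugate

/-! ### Symmetry and support of B-splines -/

theorem sum_range_neg_one_pow_mul_choose_mul_sub_pow {R : Type*} [CommRing R] {p m : ℕ}
    (hm : m < p) (y : R) :
    ∑ k ∈ range (p + 1), (-1) ^ k * (p.choose k : R) * (y - k) ^ m = 0 := by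
  have h : _ = (0 : R) := congrFun (fwdDiff_iter_pow_eq_zero_of_lt hm) (y - p)
  rw [fwdDiff_iter_eq_sum_shift, ← sum_range_reflect] at h
  rw [← h]
  refine sum_congr rfl fun k hk ↦ ?_
  have hkp : k ≤ p := mem_range_succ_iff.mp hk
  rw [Nat.add_sub_cancel, Nat.sub_sub_self hkp, Nat.choose_symm hkp]
  simp only [nsmul_eq_mul, mul_one, zsmul_eq_mul, Nat.cast_sub hkp]
  push_cast
  rw [sub_add_sub_cancel]

theorem max_neg_zero_pow {R : Type*} [CommRing R] [LinearOrder R] [IsStrictOrderedRing R] {m : ℕ}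
    (hm : m ≠ 0) (y : R) : max (-y) 0 ^ m = (-1) ^ m * (y ^ m - max y 0 ^ m) := by
  rcases le_total 0 y with hy | hy
  · rw [max_eq_left hy, max_eq_right (neg_nonpos.mpr hy), zero_pow hm, sub_self, mul_zero]
  · rw [max_eq_right hy, max_eq_left (neg_nonneg.mpr hy), zero_pow hm, sub_zero, neg_pow]

theorem bspline_neg {p : ℕ} (hp : 2 ≤ p) (t : ℝ) : bspline p (-t) = bspline p t := by
  obtain ⟨m, rfl⟩ : ∃ m, p = m + 1 := ⟨p - 1, by omega⟩
  have hvanish := sum_range_neg_one_pow_mul_choose_mul_sub_pow m.lt_succ_self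
    (t + ((m + 1 : ℕ) : ℝ) / 2)
  rw [bspline, bspline, ← sum_range_reflect, ← sub_eq_zero, ← mul_sub, ← sum_sub_distrib,
    mul_eq_zero, ← neg_eq_zero (a := ∑ _ ∈ _, _), ← sum_neg_distrib]
  refine Or.inr (Eq.trans (sum_congr rfl fun k hk ↦ ?_) hvanish)
  have hkp : k ≤ m + 1 := mem_range_succ_iff.mp hk
  have hreflect : -t + ((m + 1 : ℕ) : ℝ) / 2 - ((m + 1 - k : ℕ) : ℝ) =
      -(t + ((m + 1 : ℕ) : ℝ) / 2 - k) := by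
    rw [Nat.cast_sub hkp]
    ring
  have hsign : (-1 : ℝ) ^ (m + 1 - k) * (-1) ^ m = -(-1) ^ k := by
    rw [pow_sub₀ _ (neg_ne_zero.mpr one_ne_zero) hkp, ← inv_pow, inv_neg_one, pow_succ]
    linear_combination (-(-1 : ℝ) ^ k) * (Even.neg_one_pow ⟨m, rfl⟩ : (-1 : ℝ) ^ (m + m) = 1)
  rw [Nat.add_sub_cancel, Nat.add_sub_cancel, hreflect, Nat.choose_symm hkp,
    max_neg_zero_pow (by omega)]
  linear_combination (-((m + 1).choose k : ℝ) * ((t + ((m + 1 : ℕ) : ℝ) / 2 - k) ^ m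
    - max (t + ((m + 1 : ℕ) : ℝ) / 2 - k) 0 ^ m)) * hsign

theorem bspline_eq_zero {p : ℕ} (hp : 2 ≤ p) {t : ℝ} (ht : (p : ℝ) / 2 ≤ |t|) :
    bspline p t = 0 := by
  wlog hneg : t ≤ 0 generalizing t
  · rw [← bspline_neg hp]
    exact this (by rwa [abs_neg]) (by linarith)
  rw [abs_of_nonpos hneg] at ht
  rw [bspline, sum_eq_zero, mul_zero]
  intro k _
  rw [max_eq_right (by linarith [k.cast_nonneg (α := ℝ)]), zero_pow (by omega), mul_zero]

/-! ### Roots of unity -/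

theorem sum_range_zpow_mul_of_isPrimitiveRoot {K : Type*} [Field K] {ζ : K} {N : ℕ}
    (hζ : IsPrimitiveRoot ζ N) (a : ℤ) :
    ∑ k ∈ range N, ζ ^ (a * (k : ℤ)) = if (N : ℤ) ∣ a then (N : K) else 0 := by
  simp_rw [zpow_mul, zpow_natCast]
  split_ifs with ha
  · simp [(hζ.zpow_eq_one_iff_dvd a).mpr ha]
  · have hne : ζ ^ a ≠ 1 := mt (hζ.zpow_eq_one_iff_dvd a).mp ha
    rw [geom_sum_eq hne, ← zpow_natCast, zpow_comm, zpow_natCast, hζ.pow_eq_one, one_zpow,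
      sub_self, zero_div]

theorem isPrimitiveRoot_ww {N : ℕ} (hN : N ≠ 0) : IsPrimitiveRoot (ww N) N :=
  Complex.isPrimitiveRoot_exp N hN

theorem ww_ne_zero (N : ℕ) : ww N ≠ 0 := Complex.exp_ne_zero _

theorem conj_ww_zpow (N : ℕ) (n : ℤ) : conj (ww N ^ n) = ww N ^ (-n) := by
  have hconj : conj (ww N) = (ww N)⁻¹ := by
    rw [ww, ← Complex.exp_conj, ← Complex.exp_neg]
    simp [neg_div, map_ofNat]
  rw [map_zpow₀, hconj, inv_zpow']

theorem ww_zpow_add_half {M : ℕ} (hM : M ≠ 0) (n : ℤ) :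
    ww (2 * M) ^ (n + M) = -ww (2 * M) ^ n := by
  have hhalf : ww (2 * M) ^ M = -1 :=
    ((isPrimitiveRoot_ww (by omega)).pow (by omega) (mul_comm 2 M)).eq_neg_one_of_two_right
  rw [zpow_add₀ (ww_ne_zero _), zpow_natCast, hhalf, mul_neg_one]

/-! ### Signals with prescribed spectrum -/

/-- The inverse DFT: the signal of `Π[N]` whose spectrum is `g n` for `0 ≤ n < N`. The values of
`g` from `N` on are irrelevant. -/
noncomputable def synth (N : ℕ) (g : ℕ → ℂ) (k : ℤ) : ℂ :=
  (N : ℂ)⁻¹ * ∑ n ∈ range N, g n * ww N ^ (k * (n : ℤ))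

theorem dft_synth {N n : ℕ} (g : ℕ → ℂ) (hn : n < N) : dft N (synth N g) n = g n := by
  have hN : N ≠ 0 := by omega
  have horth (m : ℕ) (hm : m ∈ range N) :
      ∑ k ∈ range N, ww N ^ (((m : ℤ) - n) * (k : ℤ)) = if m = n then (N : ℂ) else 0 := by
    rw [sum_range_zpow_mul_of_isPrimitiveRoot (isPrimitiveRoot_ww hN)]
    congr 1
    rw [← Nat.modEq_iff_dvd, eq_iff_iff]
    exact ⟨fun h ↦ (h.eq_of_lt_of_lt hn (mem_range.mp hm)).symm, fun h ↦ by rw [h]⟩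
  calc dft N (synth N g) n
      = (N : ℂ)⁻¹ * ∑ m ∈ range N, g m * ∑ k ∈ range N, ww N ^ (((m : ℤ) - n) * (k : ℤ)) := by
        simp_rw [dft, synth, mul_sum]
        rw [sum_comm]
        refine sum_congr rfl fun m _ ↦ sum_congr rfl fun k _ ↦ ?_
        rw [show ((m : ℤ) - n) * k = -(k * n) + k * m by ring, zpow_add₀ (ww_ne_zero N)]
        ring
    _ = (N : ℂ)⁻¹ * ∑ m ∈ range N, g m * if m = n then (N : ℂ) else 0 := by
        rw [sum_congr rfl fun m hm ↦ by rw [horth m hm]]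
    _ = g n := by
        simp_rw [mul_ite, mul_zero]
        rw [sum_ite_eq', if_pos (mem_range.mpr hn)]
        field_simp

/-- The multiplier by which the operator `C` acts on spectra. -/
noncomputable def cwpMultiplier (N n : ℕ) : ℂ :=
  if n = 0 ∨ n = N / 2 then 1 else if n < N / 2 then -Complex.I else Complex.I

theorem cwpMultiplier_mul_conj (N n : ℕ) : cwpMultiplier N n * conj (cwpMultiplier N n) = 1 := by
  unfold cwpMultiplier
  split_ifs <;> simp

theorem cwpT_synth (N : ℕ) (g : ℕ → ℂ) :
    cwpT N (synth N g) = synth N fun n ↦ cwpMultiplier N n * g n := by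
  funext k
  rw [cwpT, synth]
  congr 1
  exact sum_congr rfl fun n hn ↦ by rw [dft_synth g (mem_range.mp hn), cwpMultiplier]

/-! ### Tight frames of shifts -/

theorem sum_conj_synth_shift_mul_synth_shift {d M : ℕ} (hd : d ≠ 0) (hM : M ≠ 0) (g : ℕ → ℂ)
    (j k : ℤ) :
    ∑ l ∈ range M, conj (synth (d * M) g (j - d * l)) * synth (d * M) g (k - d * l) =
      M / ((d * M : ℕ) : ℂ) ^ 2 * ∑ n ∈ range (d * M), ∑ m ∈ range (d * M),
        if n ≡ m [MOD M] then ww (d * M) ^ (k * n - j * m) * (g n * conj (g m)) else 0 := by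
  set ω := ww (d * M)
  have hω0 : ω ≠ 0 := ww_ne_zero _
  have horth (n m : ℕ) : ∑ l ∈ range M, (ω ^ d) ^ (((m : ℤ) - n) * (l : ℤ)) =
      if n ≡ m [MOD M] then (M : ℂ) else 0 := by
    have hpos : 0 < d * M := Nat.pos_of_ne_zero (mul_ne_zero hd hM)
    rw [sum_range_zpow_mul_of_isPrimitiveRoot ((isPrimitiveRoot_ww hpos.ne').pow hpos rfl)]
    simp_rw [Nat.modEq_iff_dvd]
  have hterm (l : ℕ) : conj (synth (d * M) g (j - d * l)) * synth (d * M) g (k - d * l) =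
      (((d * M : ℕ) : ℂ)⁻¹) ^ 2 * ∑ n ∈ range (d * M), ∑ m ∈ range (d * M),
        ω ^ (k * n - j * m) * (g n * conj (g m)) * (ω ^ d) ^ (((m : ℤ) - n) * (l : ℤ)) := by
    simp only [synth, map_mul, map_sum, map_inv₀, Complex.conj_natCast, conj_ww_zpow]
    rw [mul_comm, mul_mul_mul_comm, sum_mul_sum, ← sq]
    congr 1
    refine sum_congr rfl fun n _ ↦ sum_congr rfl fun m _ ↦ ?_
    have hexp : (k - d * l) * n + -((j - d * l) * m) =
        k * n - j * m + d * (((m : ℤ) - n) * l) := by ring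
    rw [mul_mul_mul_comm, ← zpow_add₀ hω0, hexp, zpow_add₀ hω0, zpow_mul ω d, zpow_natCast]
    ring
  calc _ = (((d * M : ℕ) : ℂ)⁻¹) ^ 2 * ∑ n ∈ range (d * M), ∑ m ∈ range (d * M),
        ω ^ (k * n - j * m) * (g n * conj (g m)) *
          ∑ l ∈ range M, (ω ^ d) ^ (((m : ℤ) - n) * (l : ℤ)) := by
        simp_rw [hterm, ← mul_sum, sum_comm (s := range M), ← mul_sum]
    _ = _ := by
        simp_rw [horth, mul_ite, mul_zero, mul_sum, mul_ite, mul_zero]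
        refine sum_congr rfl fun n _ ↦ sum_congr rfl fun m _ ↦ ?_
        congr 1
        ring

/-- A finite family of spectra on `0, …, dM - 1` is paraunitary if on each fibre of reduction
modulo `M` the vectors `(g i n)ᵢ` are pairwise orthogonal with the same squared norm `a`. In
filter bank terms, the modulation matrix of the `d`-fold decimated bank is a multiple of a
unitary matrix. -/
def IsParaunitary {ι : Type*} (d M : ℕ) (s : Finset ι) (g : ι → ℕ → ℂ) (a : ℂ) : Prop :=
  ∀ n < d * M, ∀ m < d * M, n ≡ m [MOD M] →
    ∑ i ∈ s, g i n * conj (g i m) = if n = m then a else 0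

theorem sum_range_mul_ite_dvd_sub_of_periodic {R : Type*} [NonAssocSemiring R] {N : ℕ} (hN : N ≠ 0)
    {x : ℤ → R} (hx : Function.Periodic x N) (k : ℤ) :
    ∑ j ∈ range N, x j * (if (N : ℤ) ∣ k - j then 1 else 0) = x k := by
  have hmod : ((k % N).toNat : ℤ) = k % N := Int.toNat_of_nonneg (Int.emod_nonneg k (by omega))
  have hlt : k % N < N := Int.emod_lt_of_pos k (by omega)
  have hxmod : x (k % N) = x k := by
    rw [Int.emod_def, mul_comm]
    exact hx.sub_int_mul_eq (k / N)
  rw [sum_eq_single_of_mem (k % N).toNat (mem_range.mpr (by omega)), hmod,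
    if_pos Int.dvd_self_sub_emod, mul_one, hxmod]
  intro j hj hne
  rw [if_neg, mul_zero]
  intro hdvd
  have hjk : (j : ℤ) % N = k % N := Int.modEq_iff_dvd.mpr hdvd
  rw [Int.emod_eq_of_lt (by omega) (by simpa using hj)] at hjk
  omega

namespace IsParaunitary

variable {ι : Type*} {d M : ℕ} {s : Finset ι} {g : ι → ℕ → ℂ} {a : ℂ}

theorem mul_left (hg : IsParaunitary d M s g a) {c : ℕ → ℂ} (hc : ∀ n, c n * conj (c n) = 1) :
    IsParaunitary d M s (fun i n ↦ c n * g i n) a := by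
  intro n hn m hm hnm
  have hfactor : ∑ i ∈ s, c n * g i n * conj (c m * g i m) =
      c n * conj (c m) * ∑ i ∈ s, g i n * conj (g i m) := by
    rw [mul_sum]
    exact sum_congr rfl fun i _ ↦ by rw [map_mul, mul_mul_mul_comm]
  rw [hfactor, hg n hn m hm hnm]
  split_ifs with h
  · rw [h, hc, one_mul]
  · rw [mul_zero]

theorem sum_conj_synth_shift_mul_synth_shift (hd : d ≠ 0) (hM : M ≠ 0)
    (hg : IsParaunitary d M s g a) (j k : ℤ) :
    ∑ i ∈ s, ∑ l ∈ range M,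
      conj (synth (d * M) (g i) (j - d * l)) * synth (d * M) (g i) (k - d * l) =
        a / d * if ((d * M : ℕ) : ℤ) ∣ k - j then 1 else 0 := by
  have hfibre (n m : ℕ) (hn : n ∈ range (d * M)) (hm : m ∈ range (d * M)) :
      (∑ i ∈ s, if n ≡ m [MOD M] then ww (d * M) ^ (k * n - j * m) * (g i n * conj (g i m))
        else 0) = if n = m then a * ww (d * M) ^ ((k - j) * (n : ℤ)) else 0 := by
    by_cases hnm : n ≡ m [MOD M]
    · simp_rw [if_pos hnm]
      rw [← mul_sum, hg n (mem_range.mp hn) m (mem_range.mp hm) hnm]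
      split_ifs with h
      · rw [h, ← sub_mul, mul_comm]
      · rw [mul_zero]
    · simp_rw [if_neg hnm]
      rw [sum_const_zero, if_neg fun h ↦ hnm (by rw [h])]
  simp_rw [WP.sum_conj_synth_shift_mul_synth_shift hd hM, ← mul_sum]
  rw [sum_comm]
  simp_rw [sum_comm (s := s)]
  rw [sum_congr rfl fun n hn ↦ sum_congr rfl fun m hm ↦ hfibre n m hn hm]
  simp_rw [sum_ite_eq]
  rw [sum_congr rfl fun n hn ↦ if_pos hn, ← mul_sum,
    sum_range_zpow_mul_of_isPrimitiveRoot (isPrimitiveRoot_ww (mul_ne_zero hd hM))]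
  have hdC : (d : ℂ) ≠ 0 := Nat.cast_ne_zero.mpr hd
  have hMC : (M : ℂ) ≠ 0 := Nat.cast_ne_zero.mpr hM
  split_ifs
  · push_cast
    field_simp
  · simp only [mul_zero]

theorem sum_inner1_shift_mul_synth_shift (hd : d ≠ 0) (hM : M ≠ 0) (hg : IsParaunitary d M s g a)
    {x : ℤ → ℂ} (hx : Function.Periodic x (d * M : ℕ)) (k : ℤ) :
    ∑ i ∈ s, ∑ l ∈ range M,
      inner1 (d * M) x (fun j ↦ synth (d * M) (g i) (j - d * l)) *
        synth (d * M) (g i) (k - d * l) = a / d * x k := by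
  calc _ = ∑ j ∈ range (d * M), x j * ∑ i ∈ s, ∑ l ∈ range M,
        conj (synth (d * M) (g i) (j - d * l)) * synth (d * M) (g i) (k - d * l) := by
        simp_rw [inner1, sum_mul, mul_sum, mul_assoc, sum_comm (s := range M)]
        rw [sum_comm]
    _ = a / d * ∑ j ∈ range (d * M), x j * if ((d * M : ℕ) : ℤ) ∣ k - j then 1 else 0 := by
        simp_rw [hg.sum_conj_synth_shift_mul_synth_shift hd hM, mul_left_comm (x _), ← mul_sum]
    _ = a / d * x k := by
        rw [sum_range_mul_ite_dvd_sub_of_periodic (mul_ne_zero hd hM) hx]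

end IsParaunitary

/-! ### Two-channel filter banks -/

/-- The pair of spectra `β[n]` (for `lam = 0`) and `ω^n β[n + M]` (otherwise) built from a low-pass
spectrum `β` of period `2M`, as `α` is built from `β` in the paper. -/
noncomputable def mirrorPair (M : ℕ) (β : ℤ → ℂ) (lam n : ℕ) : ℂ :=
  if lam = 0 then β n else ww (2 * M) ^ (n : ℤ) * β (n + M)

theorem eq_or_eq_add_or_eq_add_of_modEq {M n m : ℕ} (hn : n < 2 * M) (hm : m < 2 * M)
    (h : n ≡ m [MOD M]) : n = m ∨ m = n + M ∨ n = m + M := by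
  have hmod {r : ℕ} (hr : r < 2 * M) : r % M = r ∨ r % M + M = r := by
    rcases lt_or_ge r M with hrM | hrM
    · exact Or.inl (Nat.mod_eq_of_lt hrM)
    · rw [Nat.mod_eq_sub_mod hrM, Nat.mod_eq_of_lt (by omega)]
      omega
  have h' : n % M = m % M := h
  have hn' := hmod hn
  have hm' := hmod hm
  omega

theorem isParaunitary_mirrorPair {M : ℕ} {β : ℤ → ℂ} {a : ℂ} (hconj : ∀ n, conj (β n) = β n)
    (hper : ∀ n, β (n + M + M) = β n) (hsq : ∀ n, β n ^ 2 + β (n + M) ^ 2 = a) :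
    IsParaunitary 2 M (range 2) (mirrorPair M β) a := by
  intro n hn m hm hnm
  have hM : M ≠ 0 := by omega
  have hunit (r : ℤ) : ww (2 * M) ^ r * ww (2 * M) ^ (-r) = 1 := by
    rw [← zpow_add₀ (ww_ne_zero _), add_neg_cancel, zpow_zero]
  have hpair (r q : ℕ) : ∑ lam ∈ range 2, mirrorPair M β lam r * conj (mirrorPair M β lam q) =
      β r * β q + ww (2 * M) ^ (r : ℤ) * conj (ww (2 * M) ^ (q : ℤ)) * (β (r + M) * β (q + M)) := by
    simp only [sum_range_succ, range_zero, sum_empty, zero_add, mirrorPair, if_true, one_ne_zero,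
      if_false, map_mul, hconj]
    ring
  rw [hpair]
  rcases eq_or_eq_add_or_eq_add_of_modEq hn hm hnm with rfl | rfl | rfl
  · rw [if_pos rfl, conj_ww_zpow, hunit, ← hsq n]
    ring
  · rw [if_neg (by omega), Nat.cast_add, hper, ww_zpow_add_half hM, map_neg, conj_ww_zpow]
    linear_combination (-β n * β (n + M)) * hunit n
  · rw [if_neg (by omega), Nat.cast_add, hper, ww_zpow_add_half hM, conj_ww_zpow]
    linear_combination (-β m * β (m + M)) * hunit m

/-! ### The spectrum of the span-two B-spline -/

theorem hasSum_sum_range_sub {E : Type*} [AddCommMonoid E] [TopologicalSpace E] {M : ℕ} {f : ℤ → E}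
    (hf : ∀ k : ℤ, (M : ℤ) ≤ |k| → f k = 0) :
    HasSum f (∑ k ∈ range (2 * M), f ((k : ℤ) - M)) := by
  have hinj : Function.Injective fun k : ℕ ↦ (k : ℤ) - M := fun a b h ↦ by simpa using h
  rw [← sum_image (f := f) hinj.injOn]
  refine hasSum_sum_of_ne_finset_zero fun k hk ↦ hf k (le_of_not_gt fun hlt ↦ hk ?_)
  rw [abs_lt] at hlt
  exact mem_image.mpr ⟨(k + M).toNat, mem_range.mpr (by omega), by omega⟩

theorem hasSum_int_even_add_odd {E : Type*} [AddCommMonoid E] [TopologicalSpace E] [ContinuousAdd E]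
    {f : ℤ → E} {a b : E} (heven : HasSum (fun k ↦ f (2 * k)) a)
    (hodd : HasSum (fun k ↦ f (2 * k + 1)) b) : HasSum f (a + b) := by
  have hinj : Function.Injective fun k : ℤ ↦ 2 * k := fun _ _ h ↦ by simpa using h
  have hinj' : Function.Injective fun k : ℤ ↦ 2 * k + 1 := fun _ _ h ↦ by simpa using h
  refine (hinj.hasSum_range_iff.mpr heven).add_isCompl ?_ (hinj'.hasSum_range_iff.mpr hodd)
  simpa only [range_two_mul, range_two_mul_add_one] using Int.isCompl_even_odd

/-- The summand `ω^{-kn} b^p(k/2)` of `2 b̂_{[1]}^p[n]`. It is taken over all integers `k`, so that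
splitting by parity and reflecting `k` involve no boundary terms. -/
noncomputable def splineTerm (N p : ℕ) (n k : ℤ) : ℂ :=
  ww N ^ (-(k * n)) * (bspline p ((k : ℝ) / 2) : ℂ)

section SplineSpectrum

variable {M p : ℕ}

theorem splineTerm_eq_zero (hp : 2 ≤ p) (N : ℕ) (n : ℤ) {k : ℤ} (hk : (p : ℤ) ≤ |k|) :
    splineTerm N p n k = 0 := by
  have hk' : (p : ℝ) ≤ |(k : ℝ)| := by exact_mod_cast hk
  rw [splineTerm, bspline_eq_zero hp (by rw [abs_div, abs_two]; linarith), Complex.ofReal_zero,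
    mul_zero]

theorem conj_splineTerm (hp : 2 ≤ p) (N : ℕ) (n k : ℤ) :
    conj (splineTerm N p n k) = splineTerm N p n (-k) := by
  rw [splineTerm, splineTerm, map_mul, conj_ww_zpow, Complex.conj_ofReal, Int.cast_neg, neg_div,
    bspline_neg hp, neg_mul]

theorem splineTerm_add_half (hM : M ≠ 0) (n k : ℤ) :
    splineTerm (2 * M) p (n + M) k = (-1) ^ k * splineTerm (2 * M) p n k := by
  have hneg : ww (2 * M) ^ (M : ℤ) = -1 := by simpa using ww_zpow_add_half hM 0
  rw [splineTerm, splineTerm, mul_add, neg_add, zpow_add₀ (ww_ne_zero _), ← mul_neg, ← mul_neg,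
    mul_comm k (-(M : ℤ)), neg_mul, ← mul_neg, zpow_mul _ (M : ℤ), hneg, zpow_neg,
    ← inv_zpow, inv_neg_one]
  ring

theorem hasSum_splineTerm (hp : 2 ≤ p) (hpM : p ≤ M) (n : ℤ) :
    HasSum (splineTerm (2 * M) p n) (2 * bhat1 (2 * M) p n) := by
  convert hasSum_sum_range_sub fun k hk ↦ splineTerm_eq_zero hp (2 * M) n
    ((Nat.cast_le.mpr hpM).trans hk) using 1
  rw [bhat1, mul_sum]
  refine sum_congr rfl fun k hk ↦ ?_
  have hhalf : ((2 * M : ℕ) : ℤ) / 2 = M := by omega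
  have hmod : (k : ℤ) % ((2 * M : ℕ) : ℤ) = k :=
    Int.emod_eq_of_lt (by omega) (by exact_mod_cast mem_range.mp hk)
  rw [bs1, splineTerm, hhalf, sub_add_cancel, hmod]
  ring

theorem hasSum_splineTerm_even (hp : 2 ≤ p) (hpM : p ≤ M) (n : ℤ) :
    HasSum (fun k ↦ splineTerm (2 * M) p n (2 * k)) (uSeq (2 * M) p (2 * n)) := by
  convert hasSum_sum_range_sub (M := M) fun k hk ↦ splineTerm_eq_zero hp (2 * M) n
    (k := 2 * k) (by rw [abs_mul, abs_two]; omega) using 1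
  refine sum_congr rfl fun k _ ↦ ?_
  have hhalf : ((2 * M : ℕ) : ℤ) / 2 = M := by omega
  rw [splineTerm, hhalf]
  congr 3
  · ring
  · push_cast
    ring

theorem hasSum_splineTerm_odd (hp : 2 ≤ p) (hpM : p ≤ M) (n : ℤ) :
    HasSum (fun k ↦ splineTerm (2 * M) p n (2 * k + 1)) (vSeq (2 * M) p (2 * n)) := by
  convert hasSum_sum_range_sub (M := M) fun k hk ↦ splineTerm_eq_zero hp (2 * M) n
    (k := 2 * k + 1) (by rw [le_abs] at hk ⊢; omega) using 1
  have hphase : Complex.exp (-Real.pi * Complex.I * ((2 * n : ℤ) : ℂ) / ((2 * M : ℕ) : ℂ)) =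
      ww (2 * M) ^ (-n) := by
    rw [ww, ← Complex.exp_int_mul]
    congr 1
    push_cast
    ring
  rw [vSeq, hphase, mul_sum]
  refine sum_congr rfl fun k _ ↦ ?_
  have hhalf : ((2 * M : ℕ) : ℤ) / 2 = M := by omega
  rw [splineTerm, hhalf, ← mul_assoc, ← zpow_add₀ (ww_ne_zero _)]
  congr 3
  · ring
  · push_cast
    ring

theorem two_mul_bhat1 (hp : 2 ≤ p) (hpM : p ≤ M) (n : ℤ) :
    2 * bhat1 (2 * M) p n = uSeq (2 * M) p (2 * n) + vSeq (2 * M) p (2 * n) :=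
  (hasSum_splineTerm hp hpM n).unique <|
    hasSum_int_even_add_odd (hasSum_splineTerm_even hp hpM n) (hasSum_splineTerm_odd hp hpM n)

theorem two_mul_bhat1_add_half (hp : 2 ≤ p) (hpM : p ≤ M) (n : ℤ) :
    2 * bhat1 (2 * M) p (n + M) = uSeq (2 * M) p (2 * n) - vSeq (2 * M) p (2 * n) := by
  have hM : M ≠ 0 := by omega
  rw [sub_eq_add_neg]
  refine (hasSum_splineTerm hp hpM (n + M)).unique (hasSum_int_even_add_odd ?_ ?_)
  · simpa only [splineTerm_add_half hM, (even_two_mul _).neg_one_zpow, one_mul]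
      using hasSum_splineTerm_even hp hpM n
  · simpa only [splineTerm_add_half hM, (odd_two_mul_add_one _).neg_one_zpow, neg_one_mul]
      using (hasSum_splineTerm_odd hp hpM n).neg

theorem bhat1_add_half_add_half (hp : 2 ≤ p) (hpM : p ≤ M) (n : ℤ) :
    bhat1 (2 * M) p (n + M + M) = bhat1 (2 * M) p n := by
  have hM : M ≠ 0 := by omega
  have hterm : splineTerm (2 * M) p (n + M + M) = splineTerm (2 * M) p n := by
    funext k
    rw [splineTerm_add_half hM, splineTerm_add_half hM, ← mul_assoc, ← mul_zpow, neg_one_mul,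
      neg_neg, one_zpow, one_mul]
  have h := (hasSum_splineTerm hp hpM (n + M + M)).unique (hterm ▸ hasSum_splineTerm hp hpM n)
  exact mul_left_cancel₀ two_ne_zero h

theorem conj_bhat1 (hp : 2 ≤ p) (hpM : p ≤ M) (n : ℤ) :
    conj (bhat1 (2 * M) p n) = bhat1 (2 * M) p n := by
  have hconj : HasSum (fun k ↦ splineTerm (2 * M) p n (-k)) (conj (2 * bhat1 (2 * M) p n)) := by
    simpa only [conj_splineTerm hp] using Complex.hasSum_conj'.mpr (hasSum_splineTerm hp hpM n)
  have h := hconj.unique ((Equiv.neg ℤ).hasSum_iff.mpr (hasSum_splineTerm hp hpM n))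
  rw [map_mul, map_ofNat] at h
  exact mul_left_cancel₀ two_ne_zero h

/-! ### The low-pass spectrum -/

theorem conj_cpow_of_nonneg {z : ℂ} (hz : 0 ≤ z) (w : ℂ) : conj (z ^ w) = z ^ conj w := by
  have harg : z.arg ≠ Real.pi := by
    rw [Complex.arg_eq_zero_iff_zero_le.mpr hz]
    exact Real.pi_ne_zero.symm
  have hreal : conj z = z := Complex.conj_eq_iff_im.mpr (Complex.nonneg_iff.mp hz).2.symm
  rw [Complex.cpow_conj z w harg, hreal]

theorem upsilon_eq (hp : 2 ≤ p) (hpM : p ≤ M) (n : ℤ) :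
    upsilon (2 * M) p n = (bhat1 (2 * M) p n ^ 2 + bhat1 (2 * M) p (n + M) ^ 2) / 2 := by
  rw [upsilon]
  linear_combination
    (-(2 * bhat1 (2 * M) p n + uSeq (2 * M) p (2 * n) + vSeq (2 * M) p (2 * n)) / 8) *
      two_mul_bhat1 hp hpM n +
    (-(2 * bhat1 (2 * M) p (n + M) + uSeq (2 * M) p (2 * n) - vSeq (2 * M) p (2 * n)) / 8) *
      two_mul_bhat1_add_half hp hpM n

theorem upsilon_add_half (hp : 2 ≤ p) (hpM : p ≤ M) (n : ℤ) :
    upsilon (2 * M) p (n + M) = upsilon (2 * M) p n := by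
  rw [upsilon_eq hp hpM, upsilon_eq hp hpM, bhat1_add_half_add_half hp hpM, add_comm]

theorem conj_betaS (hp : 2 ≤ p) (hpM : p ≤ M) {n : ℤ} (h : 0 ≤ upsilon (2 * M) p n) :
    conj (betaS (2 * M) p n) = betaS (2 * M) p n := by
  rw [betaS, map_div₀, conj_bhat1 hp hpM, conj_cpow_of_nonneg h, map_div₀, map_one, map_ofNat]

theorem betaS_add_half_add_half (hp : 2 ≤ p) (hpM : p ≤ M) (n : ℤ) :
    betaS (2 * M) p (n + M + M) = betaS (2 * M) p n := by
  rw [betaS, bhat1_add_half_add_half hp hpM, upsilon_add_half hp hpM, upsilon_add_half hp hpM,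
    betaS]

theorem betaS_sq (N p : ℕ) (n : ℤ) : betaS N p n ^ 2 = bhat1 N p n ^ 2 / upsilon N p n := by
  rw [betaS, div_pow, one_div, Complex.cpow_ofNat_inv_pow]

theorem betaS_sq_add_sq (hp : 2 ≤ p) (hpM : p ≤ M) {n : ℤ} (h : upsilon (2 * M) p n ≠ 0) :
    betaS (2 * M) p n ^ 2 + betaS (2 * M) p (n + M) ^ 2 = 2 := by
  rw [betaS_sq, betaS_sq, upsilon_add_half hp hpM, ← add_div, div_eq_iff h, upsilon_eq hp hpM]
  ring

theorem isParaunitary_mirrorPair_betaS (hp : 2 ≤ p) (hpM : p ≤ M)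
    (hpos : ∀ n, 0 < upsilon (2 * M) p n) :
    IsParaunitary 2 M (range 2) (mirrorPair M (betaS (2 * M) p)) 2 :=
  isParaunitary_mirrorPair (fun n ↦ conj_betaS hp hpM (hpos n).le) (betaS_add_half_add_half hp hpM)
    fun n ↦ betaS_sq_add_sq hp hpM (hpos n).ne'

end SplineSpectrum

theorem psi1_eq_synth (M p lam : ℕ) :
    psi1 (2 * M) p lam = synth (2 * M) (mirrorPair M (betaS (2 * M) p) lam) := by
  have hhalf : ((2 * M : ℕ) : ℤ) / 2 = M := by omega
  funext k
  simp only [psi1, synth, mirrorPair, alphaS, hhalf]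

/-- The union of the shifted wavelet packets and the shifted complementary
    wavelet packets forms a tight frame of Π[N] with frame bound 2:
    x = (1/2) Σ_{λ,l} ( ⟨x,ψ_{[1],λ}^p[·−2l]⟩ ψ_{[1],λ}^p[·−2l]
                      + ⟨x,φ_{[1],λ}^p[·−2l]⟩ φ_{[1],λ}^p[·−2l] ). -/
theorem psi_cwp_tight_frame (N p : ℕ) (hN : 0 < N) (hNe : Even N)
    (hp : 2 ≤ p) (hpN : p ≤ N / 2)
    (hpos : ∀ n : ℤ, 0 < uSeq N p (2 * n) ^ 2 + vSeq N p (2 * n) ^ 2)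
    (x : ℤ → ℂ) (hper : ∀ k : ℤ, x (k + N) = x k) :
    ∀ k : ℤ,
      x k = (1 / 2 : ℂ) * ∑ lam ∈ Finset.range 2, ∑ l ∈ Finset.range (N / 2),
        (inner1 N x (fun j => psi1 N p lam (j - 2 * (l : ℤ))) * psi1 N p lam (k - 2 * (l : ℤ))
          + inner1 N x (fun j => cwpT N (psi1 N p lam) (j - 2 * (l : ℤ))) *
              cwpT N (psi1 N p lam) (k - 2 * (l : ℤ))) := by
  obtain ⟨M, rfl⟩ := hNe.two_dvd
  have hM : M ≠ 0 := by omega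
  have hhalf : 2 * M / 2 = M := by omega
  have hupsilon (n : ℤ) : 0 < upsilon (2 * M) p n := div_pos (hpos n) four_pos
  have hpara := isParaunitary_mirrorPair_betaS hp (hhalf ▸ hpN) hupsilon
  intro k
  have hpsi := hpara.sum_inner1_shift_mul_synth_shift two_ne_zero hM hper k
  have hphi := (hpara.mul_left (cwpMultiplier_mul_conj (2 * M))).sum_inner1_shift_mul_synth_shift
    two_ne_zero hM hper k
  simp only [Nat.cast_ofNat, div_self (two_ne_zero (α := ℂ)), one_mul] at hpsi hphi
  simp only [psi1_eq_synth, cwpT_synth, hhalf, sum_add_distrib]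
  rw [hpsi, hphi]
  ring

end WP
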